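/- arXiv:1908.01690 — 3 statements merged into one kernel-verified Lean document; each statement's English description precedes it below -/
import Mathlib

section
/- Let a and n be positive integers with a even. Let ε = [n ≢ 0 (mod 3)] and A = ⌊(2^a − 1)n / (3·2^{ν_2(n)})⌋, and let δ = 1 if n ≡ 3 or 5 (mod 6) and δ = 0 otherwise. Then ν_2( C(2^a n, n)_F ) = δ + A − (a/2)·ε − ν_2(A!) = δ + s_2(A) − (a/2)·ε. -/
/-!
Write `P m = F_1 ⋯ F_m`. Lengyel's description of the 2-adic valuation of Fibonacci numbers says that
`ν₂(F_i) = 0` when `3 ∤ i`, and `ν₂(F_{3k}) = 1 + [k even] + ν₂(k)` for `k > 0`. Summing over `i ≤ m`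
gives `ν₂(P m) = M + ⌊M/2⌋ + ν₂(M!)` with `M = ⌊m/3⌋` (`padicValNat_fibProd`).

Since `a` is even, `(2^a - 1) n = 3N` for some `N`, so that with `q = ⌊n/3⌋` the three floors attached
to `P (2^a n)`, `P ((2^a - 1) n)` and `P n` are `N + q`, `N` and `q`. The linear terms cancel. As
`N ≡ n (mod 2)`, the halves contribute `1` exactly when `n` and `q` are both odd, and this is `δ`. By
Legendre's formula the factorials contribute `s₂(N) + s₂(q) - s₂(N + q)`. Here `s₂(N) = s₂(A)`,
because `A` is `N` stripped of its factors of two contributed by `n`. Finally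
`N + q = ⌊4^(a/2) n / 3⌋` has the binary digits of `q` followed by `a/2` copies of the two digits
of `n mod 3`, so `s₂(N + q) = s₂(q) + (a/2) ε` (`digitSum_four_pow_mul_div_three`).
-/

/-- The Fibonomial coefficient `C(m,k)_F = (F_{m-k+1} ⋯ F_m)/(F_1 ⋯ F_k)`,
with `C(m,0)_F = 1` and `C(m,k)_F = 0` for `k > m`. -/
def fibBinom (m k : ℕ) : ℕ :=
  (∏ i ∈ Finset.range k, Nat.fib (m - i)) / ∏ i ∈ Finset.range k, Nat.fib (i + 1)

/-- The rank of appearance `z(n)`: the least positive `m` with `n ∣ F_m`. -/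
noncomputable def fibRank (n : ℕ) : ℕ := sInf {m : ℕ | 0 < m ∧ n ∣ Nat.fib m}

/-- The sum of the digits of `n` in base `q`. -/
def digitSum (q n : ℕ) : ℕ := (Nat.digits q n).sum

/-- The fibonorial `F_1 F_2 ⋯ F_m`. -/
def fibProd (m : ℕ) : ℕ := ∏ i ∈ Finset.range m, Nat.fib (i + 1)

lemma fibProd_succ (m : ℕ) : fibProd (m + 1) = fibProd m * Nat.fib (m + 1) :=
  Finset.prod_range_succ _ _

lemma fibProd_pos (m : ℕ) : 0 < fibProd m :=
  Finset.prod_pos fun i _ => Nat.fib_pos.2 (Nat.succ_pos i)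

/-- Integrality of the Fibonomial coefficients; the induction is the Fibonacci analogue of Pascal's
rule, through `F_{m+k+2} = F_m F_{k+1} + F_{m+1} F_{k+2}`. -/
lemma fibProd_mul_dvd (s : ℕ) : ∀ m k, m + k = s → fibProd m * fibProd k ∣ fibProd (m + k) := by
  induction s with
  | zero =>
    intro m k h
    obtain ⟨rfl, rfl⟩ : m = 0 ∧ k = 0 := by omega
    simp [fibProd]
  | succ s ih =>
    intro m k h
    rcases m with _ | m
    · simp [fibProd]
    rcases k with _ | k
    · simp [fibProd]
    obtain ⟨c, hc⟩ := ih m (k + 1) (by omega)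
    obtain ⟨d, hd⟩ := ih (m + 1) k (by omega)
    have e : m + 1 + k = m + (k + 1) := by ring
    rw [e] at hd
    have hf : Nat.fib (m + (k + 1) + 1)
        = Nat.fib m * Nat.fib (k + 1) + Nat.fib (m + 1) * Nat.fib (k + 1 + 1) := Nat.fib_add m (k + 1)
    refine ⟨Nat.fib m * d + Nat.fib (k + 1 + 1) * c, ?_⟩
    have e2 : m + 1 + (k + 1) = m + (k + 1) + 1 := by ring
    rw [e2, fibProd_succ (m + (k + 1)), hf, mul_add]
    calc _ = Nat.fib m * Nat.fib (k + 1) * fibProd (m + (k + 1))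
          + Nat.fib (m + 1) * Nat.fib (k + 1 + 1) * fibProd (m + (k + 1)) := by ring
      _ = Nat.fib m * Nat.fib (k + 1) * (fibProd (m + 1) * fibProd k * d)
          + Nat.fib (m + 1) * Nat.fib (k + 1 + 1) * (fibProd m * fibProd (k + 1) * c) := by
        rw [← hd, ← hc]
      _ = _ := by rw [fibProd_succ m, fibProd_succ k]; ring

lemma prod_fib_sub_mul (l k : ℕ) :
    (∏ i ∈ Finset.range k, Nat.fib (l + k - i)) * fibProd l = fibProd (l + k) := by
  induction k with
  | zero => simp
  | succ k ih =>
    rw [Finset.prod_range_succ', ← add_assoc, fibProd_succ, ← ih]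
    have : ∀ i, l + k + 1 - (i + 1) = l + k - i := fun i => by omega
    simp only [this, Nat.sub_zero]
    ring

lemma fibBinom_mul (l k : ℕ) : fibBinom (l + k) k * (fibProd l * fibProd k) = fibProd (l + k) := by
  have h := prod_fib_sub_mul l k
  have hd : fibProd k ∣ ∏ i ∈ Finset.range k, Nat.fib (l + k - i) := by
    have h2 := fibProd_mul_dvd _ l k rfl
    rw [← h, mul_comm] at h2
    exact Nat.dvd_of_mul_dvd_mul_right (fibProd_pos l) h2
  have h3 : fibBinom (l + k) k * fibProd k = ∏ i ∈ Finset.range k, Nat.fib (l + k - i) :=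
    Nat.div_mul_cancel hd
  rw [← h, ← h3]; ring

/-! ### The 2-adic valuation of Fibonacci numbers -/

lemma fib_mod_two (k : ℕ) : Nat.fib (3 * k) % 2 = 0 ∧ Nat.fib (3 * k + 1) % 2 = 1 ∧
    Nat.fib (3 * k + 2) % 2 = 1 := by
  induction k with
  | zero => decide
  | succ k ih =>
    have h1 := Nat.fib_add_two (n := 3 * k + 1)
    have h2 := Nat.fib_add_two (n := 3 * k + 2)
    have h3 := Nat.fib_add_two (n := 3 * k + 3)
    simp only [mul_add, mul_one, add_assoc, Nat.reduceAdd] at *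
    omega

lemma padicValNat_fib_of_not_dvd {i : ℕ} (h : i % 3 ≠ 0) : padicValNat 2 (Nat.fib i) = 0 := by
  apply padicValNat.eq_zero_of_not_dvd
  obtain ⟨-, h1, h2⟩ := fib_mod_two (i / 3)
  have : i = 3 * (i / 3) + 1 ∨ i = 3 * (i / 3) + 2 := by omega
  rcases this with e | e
  · rw [← e] at h1; omega
  · rw [← e] at h2; omega

lemma fib_mod_four (k : ℕ) : Nat.fib (6 * k + 3) % 4 = 2 := by
  induction k with
  | zero => decide
  | succ k ih =>
    have h : Nat.fib (6 * k + 3 + 5 + 1)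
      = Nat.fib (6 * k + 3) * 5 + Nat.fib (6 * k + 3 + 1) * 8 := Nat.fib_add (6 * k + 3) 5
    have e : 6 * (k + 1) + 3 = 6 * k + 3 + 5 + 1 := by ring
    rw [e]; omega

lemma fib_mod_sixteen (k : ℕ) : Nat.fib (12 * k + 6) % 16 = 8 := by
  induction k with
  | zero => decide
  | succ k ih =>
    have h : Nat.fib (12 * k + 6 + 11 + 1)
      = Nat.fib (12 * k + 6) * 89 + Nat.fib (12 * k + 6 + 1) * 144 := Nat.fib_add (12 * k + 6) 11
    have e : 12 * (k + 1) + 6 = 12 * k + 6 + 11 + 1 := by ring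
    rw [e]; omega

lemma padicValNat_two_pow_mul_odd (e x : ℕ) (hx : x % 2 = 1) : padicValNat 2 (2 ^ e * x) = e := by
  rw [padicValNat.mul (by positivity) (by omega), padicValNat.prime_pow,
    padicValNat.eq_zero_of_not_dvd (n := x) (by omega), add_zero]

lemma padicValNat_two_mul {x : ℕ} (hx : 0 < x) : padicValNat 2 (2 * x) = padicValNat 2 x + 1 := by
  rw [padicValNat.mul (by norm_num) (by omega), padicValNat.self (by norm_num), add_comm]

/-- Doubling the index raises the valuation by one, since `F_{2m} = F_m (2 F_{m+1} - F_m)`, where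
`8 ∣ F_m` and `F_{m+1}` is odd. -/
lemma padicValNat_fib_six_mul (k : ℕ) (hk : 0 < k) :
    padicValNat 2 (Nat.fib (6 * k)) = padicValNat 2 k + 3 := by
  induction k using Nat.strong_induction_on with
  | _ k ih =>
  rcases Nat.even_or_odd' k with ⟨j, rfl | rfl⟩
  · have hj : 0 < j := by omega
    have h8 : 8 ∣ Nat.fib (6 * j) := Nat.fib_dvd 6 (6 * j) ⟨j, rfl⟩
    have hodd := (fib_mod_two (2 * j)).2.1
    have hle := Nat.fib_le_fib_succ (n := 6 * j)
    have hpos : 0 < Nat.fib (6 * j) := Nat.fib_pos.2 (by omega)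
    have e : 3 * (2 * j) = 6 * j := by ring
    rw [e] at hodd
    obtain ⟨c, hc⟩ := h8
    have hL : 2 * Nat.fib (6 * j + 1) - Nat.fib (6 * j) = 2 ^ 1 * (Nat.fib (6 * j + 1) - 4 * c) := by
      omega
    rw [show 6 * (2 * j) = 2 * (6 * j) by ring, Nat.fib_two_mul,
      padicValNat.mul hpos.ne' (by omega), ih j (by omega) hj, hL,
      padicValNat_two_pow_mul_odd _ _ (by omega), padicValNat_two_mul hj]
  · have h := fib_mod_sixteen j
    have e : 6 * (2 * j + 1) = 12 * j + 6 := by ring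
    have hf : Nat.fib (12 * j + 6) = 2 ^ 3 * (Nat.fib (12 * j + 6) / 8) := by omega
    rw [e, hf, padicValNat_two_pow_mul_odd _ _ (by omega),
      padicValNat.eq_zero_of_not_dvd (n := 2 * j + 1) (by omega)]

lemma padicValNat_fib_three_mul (k : ℕ) (hk : 0 < k) :
    padicValNat 2 (Nat.fib (3 * k)) = 1 + (if k % 2 = 0 then 1 else 0) + padicValNat 2 k := by
  rcases Nat.even_or_odd' k with ⟨j, rfl | rfl⟩
  · rw [show 3 * (2 * j) = 6 * j by ring, padicValNat_fib_six_mul j (by omega),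
      padicValNat_two_mul (by omega), if_pos (by omega)]
    ring
  · have h := fib_mod_four j
    have e : 3 * (2 * j + 1) = 6 * j + 3 := by ring
    have hf : Nat.fib (6 * j + 3) = 2 ^ 1 * (Nat.fib (6 * j + 3) / 2) := by omega
    rw [e, hf, padicValNat_two_pow_mul_odd _ _ (by omega),
      padicValNat.eq_zero_of_not_dvd (n := 2 * j + 1) (by omega), if_neg (by omega)]

lemma padicValNat_fibProd (m : ℕ) :
    padicValNat 2 (fibProd m) = m / 3 + m / 3 / 2 + padicValNat 2 (m / 3).factorial := by
  induction m with
  | zero => simp [fibProd]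
  | succ m ih =>
    rw [fibProd_succ, padicValNat.mul (fibProd_pos m).ne' (Nat.fib_pos.2 m.succ_pos).ne', ih]
    by_cases h : (m + 1) % 3 = 0
    · have e : (m + 1) / 3 = m / 3 + 1 := by omega
      have e2 : m + 1 = 3 * (m / 3 + 1) := by omega
      have hv := padicValNat_fib_three_mul (m / 3 + 1) (by omega)
      rw [← e2] at hv
      rw [e, hv, Nat.factorial_succ, padicValNat.mul (by omega) (Nat.factorial_ne_zero _)]
      split_ifs <;> omega
    · have e : (m + 1) / 3 = m / 3 := by omega
      rw [e, padicValNat_fib_of_not_dvd h, add_zero]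

/-! ### Binary digit sums -/

lemma digitSum_two_mul_add (x r : ℕ) (hr : r < 2) : digitSum 2 (2 * x + r) = digitSum 2 x + r := by
  unfold digitSum
  rcases Nat.eq_zero_or_pos (2 * x + r) with h | h
  · obtain ⟨rfl, rfl⟩ : x = 0 ∧ r = 0 := by omega
    simp
  · rw [Nat.digits_def' (by norm_num) h, List.sum_cons, show (2 * x + r) % 2 = r by omega,
      show (2 * x + r) / 2 = x by omega, add_comm]

lemma digitSum_two_pow_mul (v x : ℕ) : digitSum 2 (2 ^ v * x) = digitSum 2 x := by
  induction v with
  | zero => simp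
  | succ v ih =>
    have := digitSum_two_mul_add (2 ^ v * x) 0 (by norm_num)
    rw [pow_succ, show 2 ^ v * 2 * x = 2 * (2 ^ v * x) + 0 by ring, this, ih, add_zero]

/-- Raising `b` by one appends the two binary digits of `n % 3`, because `4 ≡ 1 (mod 3)`. -/
lemma digitSum_four_pow_mul_div_three (b n : ℕ) :
    digitSum 2 (4 ^ b * n / 3) = digitSum 2 (n / 3) + b * (if n % 3 ≠ 0 then 1 else 0) := by
  induction b with
  | zero => simp
  | succ b ih =>
    have hm : 4 ^ b * n % 3 = n % 3 := by
      rw [Nat.mul_mod, Nat.pow_mod]; simp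
    have e : 4 ^ (b + 1) * n = 4 * (4 ^ b * n) := by ring
    rw [e]
    generalize 4 ^ b * n = y at *
    rw [add_mul, ← add_assoc, ← ih, one_mul]
    have h3 : n % 3 = 0 ∨ n % 3 = 1 ∨ n % 3 = 2 := by omega
    rcases h3 with h | h | h
    · rw [show 4 * y / 3 = 2 * (2 * (y / 3) + 0) + 0 by omega, digitSum_two_mul_add _ _ (by omega),
        digitSum_two_mul_add _ _ (by omega), h]
      simp
    · rw [show 4 * y / 3 = 2 * (2 * (y / 3) + 0) + 1 by omega, digitSum_two_mul_add _ _ (by omega),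
        digitSum_two_mul_add _ _ (by omega), h]
      simp
    · rw [show 4 * y / 3 = 2 * (2 * (y / 3) + 1) + 0 by omega, digitSum_two_mul_add _ _ (by omega),
        digitSum_two_mul_add _ _ (by omega), h]
      simp

lemma padicValNat_factorial_add_digitSum (m : ℕ) :
    padicValNat 2 m.factorial + digitSum 2 m = m := by
  have h := sub_one_mul_padicValNat_factorial (p := 2) m
  have h2 := Nat.digit_sum_le 2 m
  unfold digitSum
  omega

theorem fibonomial_two_adic_valuation_a_even
    (a n : ℕ) (ha : 0 < a) (hn : 0 < n) (haeven : Even a)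
    (ε A δ : ℕ)
    (hε : ε = if n % 3 ≠ 0 then 1 else 0)
    (hA : A = (2 ^ a - 1) * n / (3 * 2 ^ padicValNat 2 n))
    (hδ : δ = if n % 6 = 3 ∨ n % 6 = 5 then 1 else 0) :
    (padicValNat 2 (fibBinom (2 ^ a * n) n) : ℤ)
        = δ + A - (a / 2) * ε - padicValNat 2 (Nat.factorial A) ∧
    (padicValNat 2 (fibBinom (2 ^ a * n) n) : ℤ)
        = δ + digitSum 2 A - (a / 2) * ε := by
  obtain ⟨b, rfl⟩ := haeven
  have h4 : 2 ^ (b + b) = 4 ^ b := by rw [← two_mul, pow_mul]; norm_num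
  rw [h4] at hA ⊢
  obtain ⟨K, hK⟩ : ∃ K, 4 ^ b = 3 * K + 1 := by
    have : 4 ^ b % 3 = 1 := by rw [Nat.pow_mod]; simp
    exact ⟨4 ^ b / 3, by omega⟩
  have hKodd : K % 2 = 1 := by
    have : 4 ∣ 4 ^ b := dvd_pow_self 4 (by omega)
    omega
  obtain ⟨w, hw⟩ : 2 ^ padicValNat 2 n ∣ n := pow_padicValNat_dvd
  have hAw : A = K * w := by
    rw [hA, hK, Nat.add_sub_cancel]
    apply Nat.div_eq_of_eq_mul_left (by positivity)
    conv_lhs => rw [hw]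
    ring
  have hsN : digitSum 2 (K * n) = digitSum 2 A := by
    rw [hAw, ← digitSum_two_pow_mul (padicValNat 2 n) (K * w)]
    conv_lhs => rw [hw]
    congr 1; ring
  have hsM := digitSum_four_pow_mul_div_three b n
  rw [← hε] at hsM
  have hm : 4 ^ b * n = 3 * (K * n) + n := by rw [hK]; ring
  have hKn : K * n % 2 = n % 2 := by
    rw [Nat.mul_mod, hKodd]; simp
  rw [hm] at hsM ⊢
  generalize K * n = N at *
  have hB := fibBinom_mul (3 * N) n
  have hB0 : fibBinom (3 * N + n) n ≠ 0 := by
    intro h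
    rw [h, zero_mul] at hB
    exact (fibProd_pos _).ne hB
  have hv := congrArg (padicValNat 2) hB
  rw [padicValNat.mul hB0 (mul_pos (fibProd_pos _) (fibProd_pos _)).ne',
    padicValNat.mul (fibProd_pos _).ne' (fibProd_pos _).ne', padicValNat_fibProd,
    padicValNat_fibProd, padicValNat_fibProd, show 3 * N / 3 = N by omega,
    show (3 * N + n) / 3 = N + n / 3 by omega] at hv
  rw [show (3 * N + n) / 3 = N + n / 3 by omega] at hsM
  have l1 := padicValNat_factorial_add_digitSum N
  have l2 := padicValNat_factorial_add_digitSum (n / 3)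
  have l3 := padicValNat_factorial_add_digitSum (N + n / 3)
  have l4 := padicValNat_factorial_add_digitSum A
  -- The addition of the halves carries exactly when `N` and `n / 3` are both odd.
  have hcarry : (N + n / 3) / 2 = N / 2 + n / 3 / 2 + δ := by
    rw [hδ]; split_ifs <;> omega
  have hab : ((b + b : ℕ) : ℤ) / 2 = b := by omega
  rw [hab]
  have key : padicValNat 2 (fibBinom (3 * N + n) n) + b * ε = δ + digitSum 2 A := by
    omega
  have key' : (padicValNat 2 (fibBinom (3 * N + n) n) : ℤ) + b * ε = δ + digitSum 2 A := by
    exact_mod_cast key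
  constructor
  · have l4' : (padicValNat 2 A.factorial : ℤ) + digitSum 2 A = A := by exact_mod_cast l4
    linarith
  · linarith
end

section
/- For every integer n ≥ 2, the Fibonomial coefficient C(2n, n)_F is even. -/
/-- The Fibonacci factorial `F_1 ⋯ F_n`. -/
def fibFact (n : ℕ) : ℕ := ∏ i ∈ Finset.range n, Nat.fib (i + 1)

lemma fibFact_succ (n : ℕ) : fibFact (n + 1) = fibFact n * Nat.fib (n + 1) :=
  Finset.prod_range_succ _ _

lemma fibFact_pos (n : ℕ) : 0 < fibFact n :=
  Finset.prod_pos fun i _ => Nat.fib_pos.2 i.succ_pos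

/-- Integrality of the Fibonomial coefficients, by the Pascal-type recursion coming from
`F_{a+b+2} = F_{a+1} F_b + F_{a+2} F_{b+1}`. -/
lemma fibFact_mul_dvd (a b : ℕ) : fibFact a * fibFact b ∣ fibFact (a + b) := by
  induction a generalizing b with
  | zero => simp [fibFact]
  | succ a iha =>
    induction b with
    | zero => simp [fibFact]
    | succ b ihb =>
      obtain ⟨c, hc⟩ := iha (b + 1)
      obtain ⟨d, hd⟩ := ihb
      have hF : Nat.fib (a + 1 + b + 1) =
          Nat.fib (a + 1) * Nat.fib b + Nat.fib (a + 2) * Nat.fib (b + 1) :=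
        Nat.fib_add (a + 1) b
      refine ⟨c * Nat.fib b + d * Nat.fib (a + 2), ?_⟩
      have hc' : fibFact (a + 1 + b) = fibFact a * fibFact (b + 1) * c := by
        rw [← hc]; congr 1; ring
      rw [← add_assoc, fibFact_succ (a + 1 + b), hF, mul_add]
      nth_rewrite 1 [hc']
      rw [hd, fibFact_succ a, fibFact_succ b]
      ring

lemma two_dvd_fib_iff (n : ℕ) : 2 ∣ Nat.fib n ↔ 3 ∣ n := by
  have h : Nat.fib (Nat.gcd 3 n) = Nat.gcd 2 (Nat.fib n) := Nat.fib_gcd 3 n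
  rcases (Nat.dvd_prime Nat.prime_three).1 (Nat.gcd_dvd_left 3 n) with h3 | h3
  · rw [h3, Nat.fib_one] at h
    constructor
    · intro h2
      rw [Nat.gcd_eq_left h2] at h
      omega
    · intro h2
      rw [Nat.gcd_eq_left h2] at h3
      omega
  · rw [h3] at h
    exact ⟨fun _ => Nat.gcd_eq_left_iff_dvd.1 h3, fun _ => Nat.gcd_eq_left_iff_dvd.1 h.symm⟩

lemma fibFact_two_mul_succ (k : ℕ) :
    fibFact (2 * (k + 1)) = fibFact (2 * k) * Nat.fib (2 * k + 1) * Nat.fib (2 * k + 2) := by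
  rw [show 2 * (k + 1) = 2 * k + 1 + 1 by ring, fibFact_succ, fibFact_succ]

lemma two_mul_dvd_of_three_dvd (k : ℕ) (h : 3 ∣ k + 1) :
    2 * (fibFact (k + 1) * fibFact (k + 1)) ∣ fibFact (2 * (k + 1)) := by
  have h1 : fibFact k * fibFact (k + 1) ∣ fibFact (2 * k + 1) := by
    have := fibFact_mul_dvd k (k + 1)
    rwa [show k + (k + 1) = 2 * k + 1 by ring] at this
  have h2 : Nat.fib (k + 1) * 2 ∣ Nat.fib (2 * k + 2) := by
    rw [show 2 * k + 2 = 2 * (k + 1) by ring, Nat.fib_two_mul]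
    exact mul_dvd_mul_left _ (Nat.dvd_sub (dvd_mul_right _ _) ((two_dvd_fib_iff _).2 h))
  have h3 := mul_dvd_mul h1 h2
  rw [← fibFact_succ (2 * k + 1)] at h3
  rwa [show fibFact k * fibFact (k + 1) * (Nat.fib (k + 1) * 2) =
      2 * (fibFact (k + 1) * fibFact (k + 1)) by rw [fibFact_succ k]; ring] at h3

/-- If `F_{k+1}` is odd, the factor 2 only has to be found in
`F_{2k+1} · C(2k, k)_F`, a divisor of `F_{k+1}² C(2k + 2, k + 1)_F`. -/
lemma two_mul_dvd_of_not_three_dvd (k : ℕ) (h : ¬ 3 ∣ k + 1)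
    (hk : 2 * (fibFact k * fibFact k) ∣ fibFact (2 * k) * Nat.fib (2 * k + 1)) :
    2 * (fibFact (k + 1) * fibFact (k + 1)) ∣ fibFact (2 * (k + 1)) := by
  obtain ⟨c, hc⟩ := fibFact_mul_dvd (k + 1) (k + 1)
  rw [← two_mul] at hc
  obtain ⟨d, hd⟩ := hk
  have hcd : Nat.fib (k + 1) * Nat.fib (k + 1) * c = 2 * (d * Nat.fib (2 * k + 2)) := by
    apply Nat.eq_of_mul_eq_mul_left (Nat.mul_pos (fibFact_pos k) (fibFact_pos k))
    have e := fibFact_two_mul_succ k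
    rw [hc, hd, fibFact_succ k] at e
    linarith
  have h2 : 2 ∣ c := by
    have hdvd : 2 ∣ Nat.fib (k + 1) * Nat.fib (k + 1) * c := ⟨_, hcd⟩
    rw [← two_dvd_fib_iff] at h
    rcases Nat.prime_two.dvd_mul.1 hdvd with h' | h'
    · exact absurd (Nat.prime_two.dvd_mul.1 h') (by tauto)
    · exact h'
  rw [hc, mul_comm 2]
  exact mul_dvd_mul_left _ h2

lemma two_mul_fibFact_sq_dvd (n : ℕ) (hn : 2 ≤ n) :
    2 * (fibFact n * fibFact n) ∣ fibFact (2 * n) := by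
  obtain ⟨k, rfl⟩ : ∃ k, n = k + 1 := ⟨n - 1, by omega⟩
  by_cases h : 3 ∣ k + 1
  · exact two_mul_dvd_of_three_dvd k h
  · apply two_mul_dvd_of_not_three_dvd k h
    by_cases hk : 3 ∣ k
    · obtain ⟨j, rfl⟩ : ∃ j, k = j + 1 := ⟨k - 1, by omega⟩
      exact (two_mul_dvd_of_three_dvd j hk).mul_right _
    · have h1 := fibFact_mul_dvd k k
      rw [← two_mul] at h1
      rw [mul_comm 2]
      have hmod : k % 3 = 1 := by omega
      exact mul_dvd_mul h1 ((two_dvd_fib_iff _).2 (by omega))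

lemma prod_fib_sub_mul_fibFact (n k : ℕ) :
    (∏ i ∈ Finset.range k, Nat.fib (n + k - i)) * fibFact n = fibFact (n + k) := by
  induction k with
  | zero => simp
  | succ k ih =>
    rw [Finset.prod_range_succ', ← add_assoc, fibFact_succ, ← ih]
    simp only [Nat.add_sub_add_right, Nat.sub_zero]
    ring

theorem fibonomial_two_n_choose_n_even (n : ℕ) (hn : 2 ≤ n) :
    2 ∣ fibBinom (2 * n) n := by
  have hprod := prod_fib_sub_mul_fibFact n n
  rw [← two_mul] at hprod
  obtain ⟨c, hc⟩ := two_mul_fibFact_sq_dvd n hn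
  have hnum : ∏ i ∈ Finset.range n, Nat.fib (2 * n - i) = fibFact n * (2 * c) := by
    apply Nat.eq_of_mul_eq_mul_right (fibFact_pos n)
    rw [hprod, hc]; ring
  refine ⟨c, ?_⟩
  change (∏ i ∈ Finset.range n, Nat.fib (2 * n - i)) / fibFact n = 2 * c
  rw [hnum, Nat.mul_div_cancel_left _ (fibFact_pos n)]
end

section
/- Let p be any prime and let a and n be positive integers. If n ≡ 0 (mod z(p)), then p divides the Fibonomial coefficient C(p^a n, n)_F. -/
/-- Integrality of the Fibonomial coefficients, by induction on `m` through
`F_{m+1} = F_{m-k} F_k + F_{m-k+1} F_{k+1}`. -/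
lemma prod_fib_dvd (m k : ℕ) :
    ∏ i ∈ Finset.range k, Nat.fib (i + 1) ∣ ∏ i ∈ Finset.range k, Nat.fib (m - i) := by
  induction m generalizing k with
  | zero =>
    cases k with
    | zero => simp
    | succ k => simp [Finset.prod_range_succ]
  | succ m ih =>
    cases k with
    | zero => simp
    | succ k =>
      rcases lt_or_ge m k with hk | hk
      · -- A falling product longer than `m + 1` contains `F_0 = 0`.
        have h0 : ∏ i ∈ Finset.range (k + 1), Nat.fib (m + 1 - i) = 0 :=
          Finset.prod_eq_zero (Finset.mem_range.2 (Nat.succ_lt_succ hk)) (by simp)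
        exact h0 ▸ dvd_zero _
      · have hD : ∏ i ∈ Finset.range (k + 1), Nat.fib (m + 1 - i)
            = Nat.fib k * ∏ i ∈ Finset.range (k + 1), Nat.fib (m - i)
              + Nat.fib (m - k + 1)
                * ((∏ i ∈ Finset.range k, Nat.fib (m - i)) * Nat.fib (k + 1)) := by
          have hf := Nat.fib_add (m - k) k
          rw [show m - k + k + 1 = m + 1 by omega] at hf
          rw [Finset.prod_range_succ', Finset.prod_range_succ (fun i => Nat.fib (m - i))]
          simp only [Nat.add_sub_add_right, Nat.sub_zero, hf]
          ring
        rw [hD]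
        refine dvd_add (Dvd.dvd.mul_left (ih (k + 1)) _) (Dvd.dvd.mul_left ?_ _)
        rw [Finset.prod_range_succ]
        exact mul_dvd_mul_right (ih k) _

/-- With `n = t + 1`, the congruences `F_{(k+1)n} ≡ (k+1) F_n F_{n-1}^k (mod F_n^2)` and
`F_{(k+1)n+1} ≡ F_{n-1}^{k+1} (mod F_n)`, which have to be proved simultaneously. -/
lemma exists_fib_mul_expansion (t k : ℕ) : ∃ q r : ℕ,
    Nat.fib ((k + 1) * (t + 1))
      = Nat.fib (t + 1) * ((k + 1) * Nat.fib t ^ k + Nat.fib (t + 1) * q) ∧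
    Nat.fib ((k + 1) * (t + 1) + 1) = Nat.fib t ^ (k + 1) + Nat.fib (t + 1) * r := by
  induction k with
  | zero => exact ⟨0, 1, by simp, by simp [Nat.fib_add_two]⟩
  | succ k ih =>
    obtain ⟨q, r, hq, hr⟩ := ih
    refine ⟨q * Nat.fib t + r,
      Nat.fib (t + 1) * ((k + 1) * Nat.fib t ^ k + Nat.fib (t + 1) * q)
        + Nat.fib t ^ (k + 1) + r * Nat.fib t + Nat.fib (t + 1) * r, ?_, ?_⟩
    · rw [show (k + 1 + 1) * (t + 1) = (k + 1) * (t + 1) + t + 1 by ring, Nat.fib_add, hq, hr]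
      ring
    · rw [show (k + 1 + 1) * (t + 1) + 1 = (k + 1) * (t + 1) + (t + 1) + 1 by ring,
        Nat.fib_add, hq, hr, Nat.fib_add_two]
      ring

lemma mul_fib_dvd_fib_mul {p n : ℕ} (hp : 0 < p) (hn : 0 < n) (h : p ∣ Nat.fib n) :
    p * Nat.fib n ∣ Nat.fib (p * n) := by
  obtain ⟨t, rfl⟩ := Nat.exists_eq_succ_of_ne_zero hn.ne'
  obtain ⟨k, rfl⟩ := Nat.exists_eq_succ_of_ne_zero hp.ne'
  obtain ⟨q, -, hq, -⟩ := exists_fib_mul_expansion t k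
  simp only [Nat.succ_eq_add_one] at *
  rw [hq, mul_comm]
  exact mul_dvd_mul_left _ (dvd_add (dvd_mul_right _ _) (h.mul_right q))

lemma dvd_fib_of_fibRank_dvd {p n : ℕ} (hn : 0 < n) (h : fibRank p ∣ n) : p ∣ Nat.fib n := by
  have hne : {m : ℕ | 0 < m ∧ p ∣ Nat.fib m}.Nonempty := by
    -- Otherwise the infimum is the junk value `0`, which does not divide `n`.
    by_contra hemp
    rw [Set.not_nonempty_iff_eq_empty] at hemp
    rw [fibRank, hemp, Nat.sInf_empty] at h
    exact hn.ne' (Nat.eq_zero_of_zero_dvd h)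
  exact (Nat.sInf_mem hne).2.trans (Nat.fib_dvd _ _ h)

theorem prime_dvd_fibonomial_of_rank_dvd
    (p a n : ℕ) (hp : p.Prime) (ha : 0 < a) (hn : 0 < n)
    (h : fibRank p ∣ n) :
    p ∣ fibBinom (p ^ a * n) n := by
  have hdvd : p * Nat.fib n ∣ Nat.fib (p ^ a * n) :=
    (mul_fib_dvd_fib_mul hp.pos hn (dvd_fib_of_fibRank_dvd hn h)).trans
      (Nat.fib_dvd _ _ (mul_dvd_mul_right (dvd_pow_self p ha.ne') n))
  unfold fibBinom
  generalize p ^ a * n = m at hdvd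
  obtain ⟨k, rfl⟩ := Nat.exists_eq_succ_of_ne_zero hn.ne'
  refine Nat.dvd_div_of_mul_dvd ?_
  have hm : ∏ i ∈ Finset.range (k + 1), Nat.fib (m - i)
      = (∏ i ∈ Finset.range k, Nat.fib (m - 1 - i)) * Nat.fib m := by
    rw [Finset.prod_range_succ']
    simp only [Nat.sub_zero, Nat.sub_sub, Nat.add_comm 1]
  simp only [Nat.succ_eq_add_one] at *
  rw [hm, Finset.prod_range_succ, mul_assoc, mul_comm (Nat.fib (k + 1))]
  exact mul_dvd_mul (prod_fib_dvd (m - 1) k) hdvd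
end
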